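/- arXiv:2502.03008 — 2 statements merged into one kernel-verified Lean document; each statement's English description precedes it below -/
import Mathlib

section
/- Assume 0 < Δt ≤ Δx. Then for every matrix u ∈ ℝ^{N_x×N_μ}: (Δt/2) · Σ_{i=1}^{N_x} Σ_{ℓ=0}^{N_μ−1} ( Σ_{j=1}^{N_x} Σ_{k=0}^{N_μ−1} ( D^x_{ji} u_{jk} A_{kℓ} − D^{xx}_{ji} u_{jk} |A|_{kℓ} ) )² − Σ_{i=1}^{N_x} Σ_{ℓ=0}^{N_μ−1} ( Σ_{j=1}^{N_x} Σ_{k=0}^{N_μ−1} D^+_{ji} u_{jk} |A|^{1/2}_{kℓ} )² ≤ 0. -/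
/-!
The inequality holds because the jumps decouple. With `g i = u i - u (i - 1)` the row `i` of the
first expression is `-(1 / (2 Δx)) (g (i + 1) (A + |A|) + g i (A - |A|))`. Since `|A|` commutes
with `A`, `(A + |A|)(A - |A|) = A² - |A|² = 0`, so the two summands are orthogonal. Summing over
the periodic index `i` removes the shift, and `(A + |A|)² + (A - |A|)² = 4 |A|²` turns the first
expression into `Δt / (2 Δx²) ∑ g i |A|² (g i)ᵀ`, while the second one is
`1 / (2 Δx) ∑ g i |A| (g i)ᵀ`. The spectrum of `|A|` lies in `[0, 1]`, hence `|A|² ≤ |A|`, and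
`Δt ≤ Δx` concludes. No Fourier transform is needed.

`commute_of_sq_eq` and `sub_sq_posSemidef` supply the two facts on `|A|` (both through the
functional calculus); `sum_Dx`, `sum_Dxx` and `sum_Dplus` evaluate the stencils.
-/

open Finset

/-- The periodic centered-difference stencil matrix `D^x` with
`D^x_{j,j+1} = 1/(2Δx)`, `D^x_{j,j-1} = -1/(2Δx)` (indices cyclic). -/
noncomputable def Dx (Nx : ℕ) [NeZero Nx] (Δx : ℝ) : Matrix (Fin Nx) (Fin Nx) ℝ :=
  Matrix.of fun j i =>
    if i = j + 1 then 1 / (2 * Δx)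
    else if j = i + 1 then -(1 / (2 * Δx))
    else 0

/-- The periodic second-difference stabilization matrix `D^{xx}` with
`D^{xx}_{j,j} = -1/Δx`, `D^{xx}_{j,j±1} = 1/(2Δx)` (indices cyclic). -/
noncomputable def Dxx (Nx : ℕ) [NeZero Nx] (Δx : ℝ) : Matrix (Fin Nx) (Fin Nx) ℝ :=
  Matrix.of fun j i =>
    if i = j then -(1 / Δx)
    else if i = j + 1 then 1 / (2 * Δx)
    else if j = i + 1 then 1 / (2 * Δx)
    else 0

/-- The periodic forward-difference matrix `D^+` with
`D^+_{j,j} = -1/√(2Δx)`, `D^+_{j,j+1} = 1/√(2Δx)` (indices cyclic). -/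
noncomputable def Dplus (Nx : ℕ) [NeZero Nx] (Δx : ℝ) : Matrix (Fin Nx) (Fin Nx) ℝ :=
  Matrix.of fun j i =>
    if i = j then -(1 / Real.sqrt (2 * Δx))
    else if i = j + 1 then 1 / Real.sqrt (2 * Δx)
    else 0

open Matrix

/-- The matrix `B = √(A²)` is a function of `A²`, hence commutes with `A`. -/
lemma commute_of_sq_eq {n : ℕ} {A B : Matrix (Fin n) (Fin n) ℝ} (hB : B.PosSemidef)
    (h : B * B = A * A) : Commute B A := by
  have hsa : IsSelfAdjoint B := hB.isHermitian
  have hspec := (posSemidef_iff_isHermitian_and_spectrum_nonneg.mp hB).2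
  have h1 : cfc Real.sqrt (B ^ 2) = B := by
    rw [← cfc_pow_id (R := ℝ) B 2 hsa, ← cfc_comp' Real.sqrt (fun x : ℝ => x ^ 2) B
      (Real.continuous_sqrt.continuousOn) (by fun_prop) hsa]
    conv_rhs => rw [← cfc_id ℝ B hsa]
    exact cfc_congr fun x hx => Real.sqrt_sq (hspec hx)
  have h2 : Commute (B ^ 2) A := by
    rw [pow_two, h]
    exact (Commute.refl A).mul_left (Commute.refl A)
  rw [← h1]
  exact h2.cfc_real _

/-- If `B = √(A²)` and `A` has spectrum in `[-1, 1]`, then `B` has spectrum in `[0, 1]`, so that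
`B² ≤ B` in the Loewner order. -/
lemma sub_sq_posSemidef {n : ℕ} {A B : Matrix (Fin n) (Fin n) ℝ} (hA : A.IsSymm)
    (hspec : ∀ μ ∈ spectrum ℝ A, μ ∈ Set.Icc (-1 : ℝ) 1) (hB : B.PosSemidef)
    (h : B * B = A * A) : (B - B * B).PosSemidef := by
  have hAsa : IsSelfAdjoint A := by
    rw [IsSelfAdjoint, star_eq_conjTranspose, conjTranspose_eq_transpose_of_trivial]
    exact hA
  have hsa : IsSelfAdjoint B := hB.isHermitian
  have hnn := (posSemidef_iff_isHermitian_and_spectrum_nonneg.mp hB).2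
  have hle : ∀ x ∈ spectrum ℝ B, x ≤ 1 := by
    intro x hx
    have hx2 : x ^ 2 ∈ spectrum ℝ (B ^ 2) := by
      rw [← cfc_pow_id (R := ℝ) B 2 hsa, cfc_map_spectrum (fun x : ℝ => x ^ 2) B hsa]
      exact ⟨x, hx, rfl⟩
    rw [pow_two B, h, ← pow_two, ← cfc_pow_id (R := ℝ) A 2 hAsa,
      cfc_map_spectrum (fun x : ℝ => x ^ 2) A hAsa] at hx2
    obtain ⟨y, hy, hyx⟩ := hx2
    obtain ⟨h1, h2⟩ := hspec y hy
    simp only at hyx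
    nlinarith
  have hc : cfc (fun x : ℝ => x - x ^ 2) B = B - B * B := by
    rw [cfc_sub (fun x : ℝ => x) (fun x : ℝ => x ^ 2) B, cfc_id' ℝ B hsa,
      cfc_pow_id (R := ℝ) B 2 hsa, pow_two]
  rw [← hc, posSemidef_iff_isHermitian_and_spectrum_nonneg]
  refine ⟨cfc_predicate _ _, ?_⟩
  rw [cfc_map_spectrum (fun x : ℝ => x - x ^ 2) B hsa]
  rintro _ ⟨x, hx, rfl⟩
  have h0 : 0 ≤ x := hnn hx
  have h1 := hle x hx
  change 0 ≤ x - x ^ 2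
  nlinarith

section Stencils

variable {Nx : ℕ} [NeZero Nx]

lemma one_ne_zero_fin (hNx : 3 ≤ Nx) : (1 : Fin Nx) ≠ 0 := by
  obtain ⟨m, rfl⟩ := Nat.exists_eq_add_of_le' hNx
  simp

lemma one_add_one_ne_zero_fin (hNx : 3 ≤ Nx) : (1 + 1 : Fin Nx) ≠ 0 := by
  obtain ⟨m, rfl⟩ := Nat.exists_eq_add_of_le' hNx
  simp [Fin.ext_iff, Fin.val_add, Nat.mod_eq_of_lt (show 2 < m + 3 by omega)]

lemma sum_Dx (hNx : 3 ≤ Nx) (Δx : ℝ) (f : Fin Nx → ℝ) (i : Fin Nx) :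
    ∑ j, Dx Nx Δx j i * f j = (f (i - 1) - f (i + 1)) / (2 * Δx) := by
  have h2 := one_add_one_ne_zero_fin hNx
  have key : ∀ j, Dx Nx Δx j i * f j
      = (if j = i - 1 then f j / (2 * Δx) else 0) - (if j = i + 1 then f j / (2 * Δx) else 0) := by
    intro j
    have e : i = j + 1 ↔ j = i - 1 := by rw [eq_sub_iff_add_eq, eq_comm]
    have ne : i - 1 ≠ i + 1 := fun h => h2 (by
      rw [sub_eq_iff_eq_add, add_assoc] at h; simpa using h)
    simp only [Dx, Matrix.of_apply, e]
    by_cases ha : j = i - 1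
    · subst ha; simp [ne]; ring
    · simp only [if_neg ha]
      by_cases hb : j = i + 1 <;> simp [hb]; ring
  simp only [key, Finset.sum_sub_distrib, Finset.sum_ite_eq', Finset.mem_univ, if_true]
  ring

lemma sum_Dxx (hNx : 3 ≤ Nx) (Δx : ℝ) (f : Fin Nx → ℝ) (i : Fin Nx) :
    ∑ j, Dxx Nx Δx j i * f j = (f (i - 1) - 2 * f i + f (i + 1)) / (2 * Δx) := by
  have h1 := one_ne_zero_fin hNx
  have h2 := one_add_one_ne_zero_fin hNx
  have key : ∀ j, Dxx Nx Δx j i * f j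
      = (if j = i - 1 then f j / (2 * Δx) else 0) - (if j = i then f j / Δx else 0)
        + (if j = i + 1 then f j / (2 * Δx) else 0) := by
    intro j
    have e : i = j + 1 ↔ j = i - 1 := by rw [eq_sub_iff_add_eq, eq_comm]
    have ne : i - 1 ≠ i + 1 := fun h => h2 (by
      rw [sub_eq_iff_eq_add, add_assoc] at h; simpa using h)
    simp only [Dxx, Matrix.of_apply, e, eq_comm (a := i) (b := j)]
    by_cases ha : j = i - 1
    · subst ha; simp [ne, h1]; ring
    · simp only [if_neg ha]
      by_cases hc : j = i
      · subst hc; simp [h1]; ring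
      · by_cases hb : j = i + 1 <;> simp [hb, hc, h1]; ring
  simp only [key, Finset.sum_add_distrib, Finset.sum_sub_distrib, Finset.sum_ite_eq',
    Finset.mem_univ, if_true]
  ring

lemma sum_Dplus (hNx : 3 ≤ Nx) (Δx : ℝ) (f : Fin Nx → ℝ) (i : Fin Nx) :
    ∑ j, Dplus Nx Δx j i * f j = (f (i - 1) - f i) / Real.sqrt (2 * Δx) := by
  have h1 := one_ne_zero_fin hNx
  have key : ∀ j, Dplus Nx Δx j i * f j
      = (if j = i - 1 then f j / Real.sqrt (2 * Δx) else 0)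
        - (if j = i then f j / Real.sqrt (2 * Δx) else 0) := by
    intro j
    have e : i = j + 1 ↔ j = i - 1 := by rw [eq_sub_iff_add_eq, eq_comm]
    simp only [Dplus, Matrix.of_apply, e, eq_comm (a := i) (b := j)]
    by_cases ha : j = i - 1
    · subst ha; simp [h1]; ring
    · simp only [if_neg ha]
      by_cases hc : j = i <;> simp [hc]; ring
  simp only [key, Finset.sum_sub_distrib, Finset.sum_ite_eq', Finset.mem_univ, if_true]
  ring

end Stencils

lemma sum_sq_vecMul {n : ℕ} {S : Matrix (Fin n) (Fin n) ℝ} (hS : Sᵀ = S) (v : Fin n → ℝ) :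
    ∑ ℓ, ((v ᵥ* S) ℓ) ^ 2 = v ⬝ᵥ (S * S) *ᵥ v := by
  have e : S *ᵥ v = v ᵥ* S := by rw [← mulVec_transpose, hS]
  rw [← mulVec_mulVec, dotProduct_mulVec, e]
  simp [dotProduct, pow_two]

/-- For commuting symmetric `A`, `B` with `A² = B²` the ranges of `A + B` and `A - B` are
orthogonal, so the mixed terms in the square vanish. -/
lemma sum_sq_split {n : ℕ} {A B : Matrix (Fin n) (Fin n) ℝ} (hA : Aᵀ = A) (hB : Bᵀ = B)
    (hc : B * A = A * B) (h : B * B = A * A) (v w : Fin n → ℝ) :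
    ∑ ℓ, ((v ᵥ* (A + B)) ℓ + (w ᵥ* (A - B)) ℓ) ^ 2
      = v ⬝ᵥ ((A + B) * (A + B)) *ᵥ v + w ⬝ᵥ ((A - B) * (A - B)) *ᵥ w := by
  have cross : ∑ ℓ, (v ᵥ* (A + B)) ℓ * (w ᵥ* (A - B)) ℓ = 0 := by
    have hz : (A + B) * (A - B) = 0 := by
      rw [add_mul, mul_sub, mul_sub, h, hc]; abel
    change (v ᵥ* (A + B)) ⬝ᵥ (w ᵥ* (A - B)) = 0
    have hT : (A - B)ᵀ = A - B := by rw [transpose_sub, hA, hB]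
    rw [← mulVec_transpose (A - B), hT, ← dotProduct_mulVec, mulVec_mulVec, hz]
    simp
  rw [← sum_sq_vecMul (by rw [transpose_add, hA, hB]), ← sum_sq_vecMul
    (by rw [transpose_sub, hA, hB])]
  simp only [add_sq, Finset.sum_add_distrib, mul_assoc, ← Finset.mul_sum, cross]
  ring

/-- Fourier-analysis lemma: under the hyperbolic CFL condition `Δt ≤ Δx`, the
quadratic transport contribution is dominated by the stabilization term. Here
`A` is symmetric with spectrum in `[-1,1]`, `absA` is the positive semidefinite
square root of `A²` and `sqrtAbsA` the positive semidefinite square root of `absA`. -/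
theorem stmt_9 (Nx Nμ : ℕ) [NeZero Nx] [NeZero Nμ] (hNx : 3 ≤ Nx)
    (Δx Δt : ℝ) (hΔx : 0 < Δx) (hΔt : 0 < Δt) (hCFL : Δt ≤ Δx)
    (A absA sqrtAbsA : Matrix (Fin Nμ) (Fin Nμ) ℝ) (hA : A.IsSymm)
    (hspec : ∀ μ ∈ spectrum ℝ A, μ ∈ Set.Icc (-1 : ℝ) 1)
    (habs : absA.PosSemidef) (habs2 : absA * absA = A * A)
    (hsqrt : sqrtAbsA.PosSemidef) (hsqrt2 : sqrtAbsA * sqrtAbsA = absA)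
    (u : Fin Nx → Fin Nμ → ℝ) :
    Δt / 2 * ∑ i : Fin Nx, ∑ ℓ : Fin Nμ,
        (∑ j : Fin Nx, ∑ k : Fin Nμ,
          (Dx Nx Δx j i * u j k * A k ℓ - Dxx Nx Δx j i * u j k * absA k ℓ)) ^ 2
      - ∑ i : Fin Nx, ∑ ℓ : Fin Nμ,
          (∑ j : Fin Nx, ∑ k : Fin Nμ, Dplus Nx Δx j i * u j k * sqrtAbsA k ℓ) ^ 2
      ≤ 0 := by
  have hAt : Aᵀ = A := hA
  have hBt : absAᵀ = absA := by
    simpa [conjTranspose_eq_transpose_of_trivial] using habs.isHermitian.eq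
  have hSt : sqrtAbsAᵀ = sqrtAbsA := by
    simpa [conjTranspose_eq_transpose_of_trivial] using hsqrt.isHermitian.eq
  have hcomm : absA * A = A * absA := (commute_of_sq_eq habs habs2).eq
  have hpsd := sub_sq_posSemidef hA hspec habs habs2
  let g : Fin Nx → Fin Nμ → ℝ := fun i k => u i k - u (i - 1) k
  have row1 : ∀ i ℓ, ∑ j : Fin Nx, ∑ k : Fin Nμ,
      (Dx Nx Δx j i * u j k * A k ℓ - Dxx Nx Δx j i * u j k * absA k ℓ)
      = -(1 / (2 * Δx)) * ((g (i + 1) ᵥ* (A + absA)) ℓ + (g i ᵥ* (A - absA)) ℓ) := by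
    intro i ℓ
    rw [Finset.sum_comm]
    simp only [Finset.sum_sub_distrib, ← Finset.sum_mul, sum_Dx hNx Δx (fun j => u j _) i,
      sum_Dxx hNx Δx (fun j => u j _) i]
    simp only [vecMul, dotProduct, ← Finset.sum_sub_distrib, ← Finset.sum_add_distrib,
      Finset.mul_sum, g, add_sub_cancel_right, Matrix.add_apply, Matrix.sub_apply]
    refine Finset.sum_congr rfl fun k _ => ?_
    field_simp
    ring
  have row2 : ∀ i ℓ, ∑ j : Fin Nx, ∑ k : Fin Nμ, Dplus Nx Δx j i * u j k * sqrtAbsA k ℓ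
      = -(1 / Real.sqrt (2 * Δx)) * (g i ᵥ* sqrtAbsA) ℓ := by
    intro i ℓ
    rw [Finset.sum_comm]
    simp only [← Finset.sum_mul, sum_Dplus hNx Δx (fun j => u j _) i]
    simp only [vecMul, dotProduct, Finset.mul_sum, g]
    refine Finset.sum_congr rfl fun k _ => ?_
    ring
  have sq1 : (-(1 / (2 * Δx))) ^ 2 = 1 / (4 * Δx ^ 2) := by field_simp; norm_num
  have sq2 : (-(1 / Real.sqrt (2 * Δx))) ^ 2 = 1 / (2 * Δx) := by
    rw [neg_sq, div_pow, Real.sq_sqrt (by positivity), one_pow]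
  -- Periodicity: the shift `i ↦ i + 1` does not change the sum over the grid.
  have shift : ∑ i, g (i + 1) ⬝ᵥ ((A + absA) * (A + absA)) *ᵥ g (i + 1)
      = ∑ i, g i ⬝ᵥ ((A + absA) * (A + absA)) *ᵥ g i :=
    Equiv.sum_comp (Equiv.addRight (1 : Fin Nx))
      (fun i => g i ⬝ᵥ ((A + absA) * (A + absA)) *ᵥ g i)
  have hsq : (A + absA) * (A + absA) + (A - absA) * (A - absA) = (4 : ℝ) • (absA * absA) := by
    rw [add_mul, mul_add, mul_add, sub_mul, mul_sub, mul_sub, hcomm, ← habs2]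
    module
  simp only [row1, row2, mul_pow, ← Finset.mul_sum, sum_sq_split hAt hBt hcomm habs2,
    sum_sq_vecMul hSt, hsqrt2, sq1, sq2, Finset.sum_add_distrib, shift]
  rw [← Finset.sum_add_distrib]
  simp only [← dotProduct_add, ← add_mulVec, hsq, smul_mulVec, dotProduct_smul, smul_eq_mul,
    ← Finset.mul_sum]
  have hle : ∑ i, g i ⬝ᵥ (absA * absA) *ᵥ g i ≤ ∑ i, g i ⬝ᵥ absA *ᵥ g i := by
    refine Finset.sum_le_sum fun i _ => ?_
    have := hpsd.dotProduct_mulVec_nonneg (g i)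
    rw [sub_mulVec, dotProduct_sub] at this
    simpa using this
  have hnn : 0 ≤ ∑ i, g i ⬝ᵥ absA *ᵥ g i :=
    Finset.sum_nonneg fun i _ => by simpa using habs.dotProduct_mulVec_nonneg (g i)
  set X := ∑ i, g i ⬝ᵥ (absA * absA) *ᵥ g i
  set Y := ∑ i, g i ⬝ᵥ absA *ᵥ g i
  have e : Δt / 2 * (1 / (4 * Δx ^ 2) * (4 * X)) - 1 / (2 * Δx) * Y
      = (Δt * X - Δx * Y) / (2 * Δx ^ 2) := by
    field_simp
  rw [e]
  refine div_nonpos_of_nonpos_of_nonneg ?_ (by positivity)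
  nlinarith [mul_le_mul_of_nonneg_left hle hΔt.le, mul_le_mul_of_nonneg_right hCFL hnn]
end

section
/- (Energy stability of the DLRA update after basis augmentation.) Assume B^0_j > 0 and B^1_j > 0 for all j, σ ≥ 0, 0 < Δt ≤ Δx, and 1 + σΔt > 0. Define T^x_{jk} = Σ_{i,ℓ} (1/B^0_j) D^x_{ji} B^0_i v^0_{iℓ} A_{kℓ} and T^{xx}_{jk} = Σ_{i,ℓ} (1/B^0_j) D^{xx}_{ji} B^0_i v^0_{iℓ} |A|_{kℓ}, and set v^*_{jk} = (1/(1+σΔt)) ( v^0_{jk} − Δt T^x_{jk} + Δt T^{xx}_{jk} ) for all j, k (this is the S-step reconstruction, which by the basis augmentations equals the unprojected right-hand side). Suppose (v^1_0, B^1) ∈ ℝ^{N_x} × ℝ^{N_x} satisfies the coupled zeroth-moment equations (B^1_j/B^0_j) v^1_{j0} = (1/(1+σΔt)) v^0_{j0} − (Δt/(1+σΔt)) T^x_{j0} + (Δt/(1+σΔt)) T^{xx}_{j0} + (√2 σΔt/(1+σΔt)) (B^1_j/B^0_j) and B^1_j/B^0_j = 1 + σΔt (B^1_j/B^0_j)(√2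 v^1_{j0} − 2) for all j. Define the corrected update ṽ^1 ∈ ℝ^{N_x×N_μ} by ṽ^1_{j0} = v^1_{j0} and ṽ^1_{jk} = (B^0_j/B^1_j) v^*_{jk} for k ≥ 1. Then, with ũ^1_{jk} = B^1_j ṽ^1_{jk} and u^0_{jk} = B^0_j v^0_{jk}, one has (1/2) Σ_{j,k} (ũ^1_{jk})² + (1/2) Σ_j (B^1_j)² ≤ (1/2) Σ_{j,k} (u^0_{jk})² + (1/2) Σ_j (B^0_j)². -/
/-!
With `u = B⁰ v⁰` and `w = u - Δt B⁰ T^x + Δt B⁰ T^{xx}`, the stability estimate is the composition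
of two contractions.

*Transport.* Setting `c = Δt / Δx ≤ 1`, the stencils give the upwind form
`w_j = (1 - c|A|) u_j + c (|A| - A)/2 u_{j+1} + c (|A| + A)/2 u_{j-1}`.
The three coefficient matrices are positive semidefinite (this uses that the eigenvalues of `A` lie
in `[-1, 1]` and the CFL condition) and sum to the identity. Such a matrix-valued convex
combination obeys a Jensen inequality (`dotProduct_self_combination_le`), and periodicity makes the
resulting sum over cells telescope to `∑ ‖w_j‖² ≤ ∑ ‖u_j‖²` (`sum_upwind_le`).

*Coupling.* Let `s = σ Δt`. The moments `k ≥ 1` are only divided by `1 + s ≥ 1`. For `k = 0`, with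
`y = B¹ v¹₀` and `b = B¹`, the coupled equations read `(w, B⁰) = (I + s M) (y, b)` where
`M = [[1, -√2], [-√2, 2]]` is positive semidefinite, so `y² + b² ≤ w² + (B⁰)²`
(`coupling_contraction`).
-/

open Finset

/-! ### The coefficient matrices of the upwind form -/

section Spectral

open scoped MatrixOrder

/-- A positive semidefinite square root of `A²` is the absolute value of `A` in the continuous
functional calculus, so `|A| ∓ A` are twice the negative and positive parts of `A`, and `|A| ≤ 1`
when the spectrum of `A` lies in `[-1, 1]`. -/
lemma posSemidef_abs_parts {n : ℕ} {A absA : Matrix (Fin n) (Fin n) ℝ} (hA : A.IsSymm)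
    (hspec : ∀ μ ∈ spectrum ℝ A, μ ∈ Set.Icc (-1 : ℝ) 1)
    (habs : absA.PosSemidef) (habs2 : absA * absA = A * A) :
    (absA - A).PosSemidef ∧ (absA + A).PosSemidef ∧ (1 - absA).PosSemidef := by
  have hstar : star A = A := by
    rw [Matrix.star_eq_conjTranspose, Matrix.conjTranspose_eq_transpose_of_trivial]
    exact hA
  have hsa : IsSelfAdjoint A := hstar
  have h : CFC.abs A = absA := by
    unfold CFC.abs
    rw [hstar]
    exact CFC.sqrt_unique habs2 (Matrix.nonneg_iff_posSemidef.mpr habs)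
  rw [← h]
  refine ⟨?_, ?_, ?_⟩
  · rw [CFC.abs_sub_self A hsa, ← Matrix.nonneg_iff_posSemidef]
    exact nsmul_nonneg (CFC.negPart_nonneg A) 2
  · rw [CFC.abs_add_self A hsa, ← Matrix.nonneg_iff_posSemidef]
    exact nsmul_nonneg (CFC.posPart_nonneg A) 2
  · rw [← Matrix.le_iff, CFC.abs_eq_cfc_norm A hsa]
    apply cfc_le_one
    intro x hx
    rw [Real.norm_eq_abs, abs_le]
    exact hspec x hx

end Spectral

/-! ### Contractivity of the transport step -/

/-- The mixed term of a positive semidefinite form is controlled by expanding the form at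
`x - y`. -/
lemma two_mul_dotProduct_mulVec_le {n : ℕ} {Q : Matrix (Fin n) (Fin n) ℝ} (hQ : Q.PosSemidef)
    (x y : Fin n → ℝ) :
    2 * (x ⬝ᵥ Q.mulVec y) ≤ x ⬝ᵥ Q.mulVec x + y ⬝ᵥ Q.mulVec y := by
  have h := hQ.dotProduct_mulVec_nonneg (x - y)
  have hsymm : y ⬝ᵥ Q.mulVec x = x ⬝ᵥ Q.mulVec y := by
    have hT : Q.transpose = Q := by
      have := hQ.isHermitian
      rwa [Matrix.IsHermitian, Matrix.conjTranspose_eq_transpose_of_trivial] at this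
    rw [Matrix.dotProduct_mulVec, ← Matrix.mulVec_transpose, hT, dotProduct_comm]
  simp only [star_trivial, Matrix.mulVec_sub, sub_dotProduct, dotProduct_sub] at h
  linarith

/-- Jensen's inequality for the squared Euclidean norm and a convex combination whose weights are
positive semidefinite matrices. -/
lemma dotProduct_self_combination_le {n : ℕ} {P M Q : Matrix (Fin n) (Fin n) ℝ}
    (hP : P.PosSemidef) (hM : M.PosSemidef) (hQ : Q.PosSemidef) (h1 : P + M + Q = 1)
    (w a b d : Fin n → ℝ) (hw : w = P.mulVec a + M.mulVec b + Q.mulVec d) :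
    w ⬝ᵥ w ≤ a ⬝ᵥ P.mulVec a + b ⬝ᵥ M.mulVec b + d ⬝ᵥ Q.mulVec d := by
  have e1 : w ⬝ᵥ w = w ⬝ᵥ P.mulVec a + w ⬝ᵥ M.mulVec b + w ⬝ᵥ Q.mulVec d := by
    conv_lhs => rw [hw]
    rw [← hw, dotProduct_comm, hw]
    simp only [dotProduct_add]
  have e2 : w ⬝ᵥ w = w ⬝ᵥ P.mulVec w + w ⬝ᵥ M.mulVec w + w ⬝ᵥ Q.mulVec w := by
    rw [← dotProduct_add, ← dotProduct_add, ← Matrix.add_mulVec, ← Matrix.add_mulVec, h1,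
      Matrix.one_mulVec]
  have hp := two_mul_dotProduct_mulVec_le hP w a
  have hm := two_mul_dotProduct_mulVec_le hM w b
  have hq := two_mul_dotProduct_mulVec_le hQ w d
  linarith

lemma sum_upwind_le {N n : ℕ} [NeZero N] {P M Q : Matrix (Fin n) (Fin n) ℝ}
    (hP : P.PosSemidef) (hM : M.PosSemidef) (hQ : Q.PosSemidef) (h1 : P + M + Q = 1)
    (u w : Fin N → Fin n → ℝ)
    (hw : ∀ j, w j = P.mulVec (u j) + M.mulVec (u (j + 1)) + Q.mulVec (u (j - 1))) :
    ∑ j, w j ⬝ᵥ w j ≤ ∑ j, u j ⬝ᵥ u j := by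
  calc ∑ j, w j ⬝ᵥ w j
      ≤ ∑ j, (u j ⬝ᵥ P.mulVec (u j) + u (j + 1) ⬝ᵥ M.mulVec (u (j + 1))
          + u (j - 1) ⬝ᵥ Q.mulVec (u (j - 1))) :=
        Finset.sum_le_sum fun j _ => dotProduct_self_combination_le hP hM hQ h1 _ _ _ _ (hw j)
    _ = ∑ j, (u j ⬝ᵥ P.mulVec (u j) + u j ⬝ᵥ M.mulVec (u j) + u j ⬝ᵥ Q.mulVec (u j)) := by
        simp only [Finset.sum_add_distrib]
        have hM' := Equiv.sum_comp (Equiv.addRight (1 : Fin N)) fun j => u j ⬝ᵥ M.mulVec (u j)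
        have hQ' := Equiv.sum_comp (Equiv.subRight (1 : Fin N)) fun j => u j ⬝ᵥ Q.mulVec (u j)
        simp only [Equiv.coe_addRight, Equiv.subRight_apply] at hM' hQ'
        rw [hM', hQ']
    _ = ∑ j, u j ⬝ᵥ u j := by
        refine Finset.sum_congr rfl fun j _ => ?_
        rw [← dotProduct_add, ← dotProduct_add, ← Matrix.add_mulVec, ← Matrix.add_mulVec, h1,
          Matrix.one_mulVec]

/-! ### The stencils -/

/-- At least three cells are needed for the neighbours of a cell on the cycle to be distinct. -/
lemma fin_neighbours_ne {N : ℕ} [NeZero N] (hN : 3 ≤ N) (j : Fin N) :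
    j + 1 ≠ j ∧ j - 1 ≠ j ∧ j - 1 ≠ j + 1 := by
  obtain ⟨m, rfl⟩ : ∃ m, N = m + 3 := ⟨N - 3, by omega⟩
  have h2 : (1 + 1 : Fin (m + 3)) ≠ 0 := by
    intro h
    have := congrArg Fin.val h
    rw [Fin.val_add] at this
    simp only [Fin.val_one, Fin.val_zero] at this
    rw [Nat.mod_eq_of_lt (by omega)] at this
    omega
  refine ⟨by simp, by simp, fun h => h2 ?_⟩
  have : (j + 1) - (j - 1) = 0 := by rw [h, sub_self]
  rw [← this]
  abel

lemma sum_Dx_mul {N : ℕ} [NeZero N] (hN : 3 ≤ N) (Δx : ℝ) (f : Fin N → ℝ) (j : Fin N) :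
    ∑ i, Dx N Δx j i * f i = (f (j + 1) - f (j - 1)) / (2 * Δx) := by
  obtain ⟨-, -, h3⟩ := fin_neighbours_ne hN j
  have h : ∀ i, Dx N Δx j i * f i =
      (if i = j + 1 then 1 / (2 * Δx) * f i else 0)
        + (if i = j - 1 then -(1 / (2 * Δx)) * f i else 0) := by
    intro i
    have e : (j = i + 1) ↔ (i = j - 1) := by rw [eq_sub_iff_add_eq, eq_comm]
    simp only [Dx, Matrix.of_apply, e]
    by_cases a : i = j + 1
    · subst a
      simp [h3.symm]
    · rw [if_neg a, if_neg a, zero_add, ite_mul, zero_mul]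
  simp only [h, Finset.sum_add_distrib, Finset.sum_ite_eq', Finset.mem_univ, if_true]
  ring

lemma sum_Dxx_mul {N : ℕ} [NeZero N] (hN : 3 ≤ N) (Δx : ℝ) (f : Fin N → ℝ) (j : Fin N) :
    ∑ i, Dxx N Δx j i * f i = (f (j + 1) - 2 * f j + f (j - 1)) / (2 * Δx) := by
  obtain ⟨h1, h2, h3⟩ := fin_neighbours_ne hN j
  have h : ∀ i, Dxx N Δx j i * f i =
      (if i = j then -(1 / Δx) * f i else 0)
        + (if i = j + 1 then 1 / (2 * Δx) * f i else 0)
        + (if i = j - 1 then 1 / (2 * Δx) * f i else 0) := by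
    intro i
    have e : (j = i + 1) ↔ (i = j - 1) := by rw [eq_sub_iff_add_eq, eq_comm]
    simp only [Dxx, Matrix.of_apply, e]
    by_cases c : i = j
    · subst c
      rw [if_pos rfl, if_pos rfl, if_neg h1.symm, if_neg h2.symm]
      ring
    · by_cases a : i = j + 1
      · rw [if_neg c, if_pos a, if_neg c, if_pos a, if_neg (fun b => h3 (b.symm.trans a))]
        ring
      · by_cases b : i = j - 1
        · rw [if_neg c, if_neg a, if_pos b, if_neg c, if_neg a, if_pos b]
          ring
        · rw [if_neg c, if_neg a, if_neg b, if_neg c, if_neg a, if_neg b]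
          ring
  simp only [h, Finset.sum_add_distrib, Finset.sum_ite_eq', Finset.mem_univ, if_true]
  ring

/-- In the conserved variable `u = B v`, the weights `1 / B j` and `B i` disappear and the double
sum is the stencil applied to `C u`. -/
lemma mul_sum_weighted_eq {N n : ℕ} (D : Matrix (Fin N) (Fin N) ℝ) (C : Matrix (Fin n) (Fin n) ℝ)
    (B : Fin N → ℝ) (v : Fin N → Fin n → ℝ) (j : Fin N) (hB : B j ≠ 0) (k : Fin n) :
    B j * ∑ i, ∑ l, (1 / B j) * D j i * B i * v i l * C k l
      = ∑ i, D j i * C.mulVec (fun l => B i * v i l) k := by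
  rw [Finset.mul_sum]
  refine Finset.sum_congr rfl fun i _ => ?_
  simp only [Matrix.mulVec, dotProduct]
  rw [Finset.mul_sum, Finset.mul_sum]
  refine Finset.sum_congr rfl fun l _ => ?_
  field_simp

/-! ### The coupling to the internal energy -/

/-- The inverse of `I + s M`, with `M = [[1, -√2], [-√2, 2]]` positive semidefinite, is a
contraction. -/
lemma coupling_contraction {s w a y b : ℝ} (hs : 0 ≤ s)
    (hw : w = (1 + s) * y - Real.sqrt 2 * s * b)
    (ha : a = (1 + 2 * s) * b - Real.sqrt 2 * s * y) :
    y ^ 2 + b ^ 2 ≤ w ^ 2 + a ^ 2 := by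
  have h2 : Real.sqrt 2 ^ 2 = 2 := Real.sq_sqrt (by norm_num)
  -- The vector `M (y, b)` is `(y - √2 b) (1, -√2)`.
  have e : w ^ 2 + a ^ 2 = y ^ 2 + b ^ 2 + (2 * s + 3 * s ^ 2) * (y - Real.sqrt 2 * b) ^ 2 := by
    subst hw ha
    linear_combination (s ^ 2 * (y ^ 2 - 2 * b ^ 2) - 2 * s * b ^ 2) * h2
  rw [e]
  have : 0 ≤ (2 * s + 3 * s ^ 2) * (y - Real.sqrt 2 * b) ^ 2 := by positivity
  linarith

/-- Energy stability of the DLRA update after basis augmentation: thanks to the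
exactness of the augmented projections, the S-step reconstruction `v*` equals
the explicit update, and the corrected low-rank update `ṽ¹` together with the
internal energy `B¹` satisfies `E¹ ≤ E⁰`. -/
theorem stmt_14 (Nx Nμ : ℕ) [NeZero Nx] [NeZero Nμ] (hNx : 3 ≤ Nx)
    (Δx Δt σ : ℝ) (hΔx : 0 < Δx) (hΔt : 0 < Δt) (hCFL : Δt ≤ Δx) (hσ : 0 ≤ σ)
    (hσΔt : 0 < 1 + σ * Δt)
    (A absA : Matrix (Fin Nμ) (Fin Nμ) ℝ) (hA : A.IsSymm)
    (hspec : ∀ μ ∈ spectrum ℝ A, μ ∈ Set.Icc (-1 : ℝ) 1)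
    (habs : absA.PosSemidef) (habs2 : absA * absA = A * A)
    (B0 B1 : Fin Nx → ℝ) (hB0 : ∀ j, 0 < B0 j) (hB1 : ∀ j, 0 < B1 j)
    (v0 : Fin Nx → Fin Nμ → ℝ)
    (Tx Txx vstar : Fin Nx → Fin Nμ → ℝ)
    (hTx : ∀ j k, Tx j k = ∑ i : Fin Nx, ∑ ℓ : Fin Nμ,
        (1 / B0 j) * Dx Nx Δx j i * B0 i * v0 i ℓ * A k ℓ)
    (hTxx : ∀ j k, Txx j k = ∑ i : Fin Nx, ∑ ℓ : Fin Nμ,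
        (1 / B0 j) * Dxx Nx Δx j i * B0 i * v0 i ℓ * absA k ℓ)
    (hvstar : ∀ j k, vstar j k
        = (1 / (1 + σ * Δt)) * (v0 j k - Δt * Tx j k + Δt * Txx j k))
    (v10 : Fin Nx → ℝ)
    (hv10 : ∀ j, (B1 j / B0 j) * v10 j
        = (1 / (1 + σ * Δt)) * v0 j 0 - (Δt / (1 + σ * Δt)) * Tx j 0
          + (Δt / (1 + σ * Δt)) * Txx j 0
          + (Real.sqrt 2 * σ * Δt / (1 + σ * Δt)) * (B1 j / B0 j))
    (hB1eq : ∀ j, B1 j / B0 j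
        = 1 + σ * Δt * (B1 j / B0 j) * (Real.sqrt 2 * v10 j - 2))
    (vt1 : Fin Nx → Fin Nμ → ℝ)
    (hvt0 : ∀ j, vt1 j 0 = v10 j)
    (hvtk : ∀ j k, k ≠ 0 → vt1 j k = (B0 j / B1 j) * vstar j k) :
    (1 / 2) * ∑ j : Fin Nx, ∑ k : Fin Nμ, (B1 j * vt1 j k) ^ 2
        + (1 / 2) * ∑ j : Fin Nx, (B1 j) ^ 2
      ≤ (1 / 2) * ∑ j : Fin Nx, ∑ k : Fin Nμ, (B0 j * v0 j k) ^ 2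
        + (1 / 2) * ∑ j : Fin Nx, (B0 j) ^ 2 := by
  obtain ⟨hm, hp, h1⟩ := posSemidef_abs_parts hA hspec habs habs2
  set c : ℝ := Δt / Δx with hc
  have hc0 : 0 ≤ c := by positivity
  have hc1 : c ≤ 1 := (div_le_one hΔx).mpr hCFL
  set s : ℝ := σ * Δt with hs
  have hs0 : 0 ≤ s := mul_nonneg hσ hΔt.le
  set u : Fin Nx → Fin Nμ → ℝ := fun j k => B0 j * v0 j k with hu
  set w : Fin Nx → Fin Nμ → ℝ := fun j k => u j k - Δt * (B0 j * Tx j k) + Δt * (B0 j * Txx j k)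
    with hw
  have hP : (1 - c • absA).PosSemidef := by
    -- `1 - c|A| = (1 - c) + c (1 - |A|)`
    have : 1 - c • absA = (1 - c) • (1 : Matrix (Fin Nμ) (Fin Nμ) ℝ) + c • (1 - absA) := by
      module
    rw [this]
    exact (Matrix.PosSemidef.one.smul (sub_nonneg.mpr hc1)).add (h1.smul hc0)
  have hM : ((c / 2) • (absA - A)).PosSemidef := hm.smul (by positivity)
  have hQ : ((c / 2) • (absA + A)).PosSemidef := hp.smul (by positivity)
  have hsum : (1 - c • absA) + (c / 2) • (absA - A) + (c / 2) • (absA + A) = 1 := by module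
  have hup : ∀ j, w j = (1 - c • absA).mulVec (u j) + ((c / 2) • (absA - A)).mulVec (u (j + 1))
      + ((c / 2) • (absA + A)).mulVec (u (j - 1)) := by
    intro j
    funext k
    have hx : B0 j * Tx j k
        = (A.mulVec (u (j + 1)) k - A.mulVec (u (j - 1)) k) / (2 * Δx) := by
      rw [hTx, mul_sum_weighted_eq (Dx Nx Δx) A B0 v0 j (hB0 j).ne' k]
      exact sum_Dx_mul hNx Δx (fun i => A.mulVec (u i) k) j
    have hxx : B0 j * Txx j k = (absA.mulVec (u (j + 1)) k - 2 * absA.mulVec (u j) k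
        + absA.mulVec (u (j - 1)) k) / (2 * Δx) := by
      rw [hTxx, mul_sum_weighted_eq (Dxx Nx Δx) absA B0 v0 j (hB0 j).ne' k]
      exact sum_Dxx_mul hNx Δx (fun i => absA.mulVec (u i) k) j
    simp only [hw, hx, hxx, Matrix.sub_mulVec, Matrix.add_mulVec, Matrix.smul_mulVec,
      Matrix.one_mulVec, Pi.add_apply, Pi.sub_apply, Pi.smul_apply, smul_eq_mul, hc]
    field_simp
    ring
  have htransport := sum_upwind_le hP hM hQ hsum u w hup
  simp only [dotProduct, ← pow_two] at htransport
  have hzero : ∀ j, (B1 j * vt1 j 0) ^ 2 + B1 j ^ 2 ≤ w j 0 ^ 2 + B0 j ^ 2 := by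
    intro j
    have hb := (hB0 j).ne'
    rw [hvt0]
    apply coupling_contraction hs0
    · have h := hv10 j
      rw [mul_assoc (Real.sqrt 2), ← hs] at h
      simp only [hw, hu]
      field_simp at h
      linear_combination -h
    · have h := hB1eq j
      field_simp at h
      linear_combination -h
  have hpos : ∀ j k, k ≠ 0 → (B1 j * vt1 j k) ^ 2 ≤ w j k ^ 2 := by
    intro j k hk
    have hb := (hB1 j).ne'
    have e : B1 j * vt1 j k = w j k / (1 + s) := by
      rw [hvtk j k hk, hvstar]
      simp only [hw, hu]
      field_simp
    rw [e, div_pow]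
    exact div_le_self (sq_nonneg _) (one_le_pow₀ (by linarith))
  have hcell : ∀ j, (∑ k, (B1 j * vt1 j k) ^ 2) + B1 j ^ 2 ≤ (∑ k, w j k ^ 2) + B0 j ^ 2 := by
    intro j
    rw [← Finset.add_sum_erase _ _ (Finset.mem_univ (0 : Fin Nμ)),
      ← Finset.add_sum_erase _ (fun k => w j k ^ 2) (Finset.mem_univ (0 : Fin Nμ))]
    have h := Finset.sum_le_sum fun k (hk : k ∈ Finset.univ.erase (0 : Fin Nμ)) =>
      hpos j k (Finset.ne_of_mem_erase hk)
    linarith [hzero j]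
  have htotal := Finset.sum_le_sum fun j (_ : j ∈ Finset.univ) => hcell j
  rw [Finset.sum_add_distrib, Finset.sum_add_distrib] at htotal
  linarith
end
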